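/- A quasi-identity in the language {∧, ∨, ∼, ∇, 0, 1} is admissible in the six-element involutive Stone algebra L₆ (equivalently, admissible in the variety of involutive Stone algebras) if and only if it is valid in the twenty-element product algebra 2 × T, where T is the ten-element algebra whose {∧, ∨, ∼, 0, 1}-reduct is (isomorphic to) the De Morgan algebra D̄₄₂ and whose operation ∇ fixes 0 and sends every other element to 1, and 2 is the two-element algebra on {0, 1} with ∼0 = 1, ∼1 = 0, ∇0 = 0, ∇1 = 1. -/

import Mathlib

/-! Let `F` be the free algebra on countably many generators in the variety generated by `L₆`.
Admissibility in `L₆` is validity in `F`, so it suffices to compare `F` with `2 × T`.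

* `2 × T` satisfies exactly the identities of `L₆`. Three homomorphisms to `L₆` separate its
  points (`joint_injective`), and one of them, which restricts the subsets of `{x, y, z}` to
  `{x, y}`, is onto (`homD4_surjective`). Hence a quasi-identity valid in `2 × T` is admissible: if
  a substitution makes the premises valid in `L₆`, it makes them valid in `2 × T`, hence the
  conclusion too, which then transfers back to `L₆`.

* `2 × T` embeds into `F`, so quasi-identities of `F` hold in `2 × T`. The embedding `emb` uses two
  variables `p`, `q`. Put `p⁻ = p ∧ ∼p`, `p⁺ = p ∨ ∼p`, and likewise for `q`. On the assignments
  where both `p` and `q` lie in `{d, a, b, c}`, the atoms `{x}`, `{y}`, `{z}` of `T` go to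
  `p⁻ ∨ (p⁺ ∧ q⁻)`, `q⁻ ∨ (p⁻ ∧ q⁺)`, `p⁺ ∧ q⁺`, and `∅` to the meet of the first two; the other
  assignments are used for the factor `2`. The two cases are glued by the Boolean element
  `∇p⁻ ∧ ∇q⁻`. At each assignment the resulting map `2 × T → L₆` is one of six homomorphisms
  (`exists_hom_emb`), and three assignments recover the three separating homomorphisms
  (`emb_injective`).
-/


/-- Terms in the language {∧, ∨, ∼, ∇, 0, 1} over a set `V` of variables. -/
inductive ISTerm (V : Type) : Type
  | var : V → ISTerm V
  | meet : ISTerm V → ISTerm V → ISTerm V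
  | join : ISTerm V → ISTerm V → ISTerm V
  | sim : ISTerm V → ISTerm V    -- ∼
  | nabla : ISTerm V → ISTerm V  -- ∇
  | zero : ISTerm V
  | one : ISTerm V

/-- An algebra in the language {∧, ∨, ∼, ∇, 0, 1}. -/
structure ISAlg where
  carrier : Type
  meet : carrier → carrier → carrier
  join : carrier → carrier → carrier
  sim : carrier → carrier
  nabla : carrier → carrier
  zero : carrier
  one : carrier

/-- Evaluation of a term in an algebra under an assignment of the variables. -/
def ISTerm.eval {V : Type} (A : ISAlg) (v : V → A.carrier) : ISTerm V → A.carrier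
  | .var x => v x
  | .meet t s => A.meet (t.eval A v) (s.eval A v)
  | .join t s => A.join (t.eval A v) (s.eval A v)
  | .sim t => A.sim (t.eval A v)
  | .nabla t => A.nabla (t.eval A v)
  | .zero => A.zero
  | .one => A.one

/-- Substitution of terms for variables. -/
def ISTerm.subst {V W : Type} (s : V → ISTerm W) : ISTerm V → ISTerm W
  | .var x => s x
  | .meet t u => .meet (t.subst s) (u.subst s)
  | .join t u => .join (t.subst s) (u.subst s)
  | .sim t => .sim (t.subst s)
  | .nabla t => .nabla (t.subst s)
  | .zero => .zero
  | .one => .one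

/-- Validity of the identity `φ ≈ ψ` in the algebra `A`. -/
def ISIdValid {V : Type} (A : ISAlg) (φ ψ : ISTerm V) : Prop :=
  ∀ v : V → A.carrier, φ.eval A v = ψ.eval A v

/-- Validity of the quasi-identity `Γ ⇒ φ ≈ ψ` in the algebra `A`. -/
def ISQValid (A : ISAlg) (Γ : List (ISTerm ℕ × ISTerm ℕ)) (φ ψ : ISTerm ℕ) : Prop :=
  ∀ v : ℕ → A.carrier,
    (∀ p ∈ Γ, p.1.eval A v = p.2.eval A v) → φ.eval A v = ψ.eval A v

/-- Admissibility of the quasi-identity `Γ ⇒ φ ≈ ψ` in the algebra `M`. -/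
def ISAdmissible (M : ISAlg) (Γ : List (ISTerm ℕ × ISTerm ℕ)) (φ ψ : ISTerm ℕ) : Prop :=
  ∀ s : ℕ → ISTerm ℕ,
    (∀ p ∈ Γ, ISIdValid M (p.1.subst s) (p.2.subst s)) →
    ISIdValid M (φ.subst s) (ψ.subst s)

/-- The Dershowitz–Manna multiset ordering (induced by the usual order on `ℕ`). -/
def MultisetLE (N N' : Multiset ℕ) : Prop :=
  ∀ x : ℕ, N'.count x < N.count x → ∃ y : ℕ, x < y ∧ N.count y < N'.count y

/-- L₆: the six-element involutive Stone algebra on {0, d, a, b, c, 1}: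
0 < d, d < a, d < b, a < c, b < c, c < 1, with a, b incomparable. -/
inductive L6 : Type
  | z  -- 0
  | d
  | a
  | b
  | c
  | u  -- 1
deriving DecidableEq

def L6.meet : L6 → L6 → L6
  | .z, _ => .z
  | _, .z => .z
  | .u, y => y
  | x, .u => x
  | .d, _ => .d
  | _, .d => .d
  | .c, y => y
  | x, .c => x
  | .a, .a => .a
  | .a, .b => .d
  | .b, .a => .d
  | .b, .b => .b

def L6.join : L6 → L6 → L6
  | .u, _ => .u
  | _, .u => .u
  | .z, y => y
  | x, .z => x
  | .c, _ => .c
  | _, .c => .c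
  | .d, y => y
  | x, .d => x
  | .a, .a => .a
  | .a, .b => .c
  | .b, .a => .c
  | .b, .b => .b

/-- ∼ swaps 0 and 1, swaps c and d, and fixes a and b. -/
def L6.sim : L6 → L6
  | .z => .u
  | .u => .z
  | .c => .d
  | .d => .c
  | .a => .a
  | .b => .b

/-- ∇0 = 0 and ∇x = 1 for x ≠ 0. -/
def L6.nabla : L6 → L6
  | .z => .z
  | _ => .u

def L6alg : ISAlg := ⟨L6, L6.meet, L6.join, L6.sim, L6.nabla, L6.z, L6.u⟩

/-- Carrier of the ten-element De Morgan algebra D̄₄₂: the subsets of a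
three-element set {x, y, z} (here `Fin 3` with x = 0, y = 1, z = 2) together
with a new bottom (`none`) and a new top (`some none`). -/
abbrev D42c : Type := Option (Option (Finset (Fin 3)))

def D42meet : D42c → D42c → D42c
  | none, _ => none
  | _, none => none
  | some none, y => y
  | x, some none => x
  | some (some s), some (some t) => some (some (s ∩ t))

def D42join : D42c → D42c → D42c
  | some none, _ => some none
  | _, some none => some none
  | none, y => y
  | x, none => x
  | some (some s), some (some t) => some (some (s ∪ t))

/-- Negation on D̄₄₂: ¬0 = 1, ¬1 = 0, and ¬S = {x,y,z} ∖ τ(S) where τ swaps x, y. -/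
def D42neg : D42c → D42c
  | none => some none
  | some none => none
  | some (some s) => some (some ((s.image (⇑(Equiv.swap (0 : Fin 3) 1)))ᶜ))

/-- ∇ fixes the bottom and sends every other element to the top. -/
def D42nabla : D42c → D42c
  | none => none
  | _ => some none

/-- T: the ten-element algebra whose {∧, ∨, ∼, 0, 1}-reduct is D̄₄₂ and whose
∇ fixes 0 and sends every other element to 1. -/
def Talg : ISAlg := ⟨D42c, D42meet, D42join, D42neg, D42nabla, none, some none⟩

/-- 2: the two-element algebra on {0, 1} with ∼0 = 1, ∼1 = 0, ∇0 = 0, ∇1 = 1. -/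
def twoIS : ISAlg := ⟨Fin 2, min, max, ![1, 0], ![0, 1], 0, 1⟩

/-- The product of two algebras with componentwise operations. -/
def prodIS (A B : ISAlg) : ISAlg where
  carrier := A.carrier × B.carrier
  meet := fun x y => (A.meet x.1 y.1, B.meet x.2 y.2)
  join := fun x y => (A.join x.1 y.1, B.join x.2 y.2)
  sim := fun x => (A.sim x.1, B.sim x.2)
  nabla := fun x => (A.nabla x.1, B.nabla x.2)
  zero := (A.zero, B.zero)
  one := (A.one, B.one)

/-! ### Homomorphisms and evaluation -/

/-- Homomorphisms between algebras in the language {∧, ∨, ∼, ∇, 0, 1}. -/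
structure ISHom (A B : ISAlg) where
  toFun : A.carrier → B.carrier
  map_meet : ∀ x y, toFun (A.meet x y) = B.meet (toFun x) (toFun y)
  map_join : ∀ x y, toFun (A.join x y) = B.join (toFun x) (toFun y)
  map_sim : ∀ x, toFun (A.sim x) = B.sim (toFun x)
  map_nabla : ∀ x, toFun (A.nabla x) = B.nabla (toFun x)
  map_zero : toFun A.zero = B.zero
  map_one : toFun A.one = B.one

theorem ISHom.map_eval {A B : ISAlg} (h : ISHom A B) {V : Type} (v : V → A.carrier)
    (t : ISTerm V) : h.toFun (t.eval A v) = t.eval B (fun n => h.toFun (v n)) := by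
  induction t with
  | var x => rfl
  | meet t s iht ihs => simp only [ISTerm.eval, h.map_meet, iht, ihs]
  | join t s iht ihs => simp only [ISTerm.eval, h.map_join, iht, ihs]
  | sim t ih => simp only [ISTerm.eval, h.map_sim, ih]
  | nabla t ih => simp only [ISTerm.eval, h.map_nabla, ih]
  | zero => exact h.map_zero
  | one => exact h.map_one

theorem ISTerm.eval_subst {V W : Type} (A : ISAlg) (s : V → ISTerm W) (v : W → A.carrier)
    (t : ISTerm V) : (t.subst s).eval A v = t.eval A (fun n => (s n).eval A v) := by
  induction t with
  | var x => rfl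
  | meet t s iht ihs => simp only [ISTerm.eval, ISTerm.subst, iht, ihs]
  | join t s iht ihs => simp only [ISTerm.eval, ISTerm.subst, iht, ihs]
  | sim t ih => simp only [ISTerm.eval, ISTerm.subst, ih]
  | nabla t ih => simp only [ISTerm.eval, ISTerm.subst, ih]
  | zero => rfl
  | one => rfl

/-- A homomorphism on the first factor, precomposed with the projection. -/
def ISHom.compFst {A B C : ISAlg} (h : ISHom A C) : ISHom (prodIS A B) C where
  toFun x := h.toFun x.1
  map_meet x y := h.map_meet x.1 y.1
  map_join x y := h.map_join x.1 y.1
  map_sim x := h.map_sim x.1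
  map_nabla x := h.map_nabla x.1
  map_zero := h.map_zero
  map_one := h.map_one

/-- A homomorphism on the second factor, precomposed with the projection. -/
def ISHom.compSnd {A B C : ISAlg} (h : ISHom B C) : ISHom (prodIS A B) C where
  toFun x := h.toFun x.2
  map_meet x y := h.map_meet x.2 y.2
  map_join x y := h.map_join x.2 y.2
  map_sim x := h.map_sim x.2
  map_nabla x := h.map_nabla x.2
  map_zero := h.map_zero
  map_one := h.map_one

/-! ### Homomorphisms from 2 × T to L₆ -/

/-- The inclusion of `2` in `L₆`, as a map. -/
def boolVal (i : Fin 2) : L6 := if i = 0 then .z else .u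

/-- The inclusion of `2` in `L₆`. -/
def boolHom : ISHom twoIS L6alg where
  toFun := boolVal
  map_meet := show ∀ x y : Fin 2, boolVal (min x y) = (boolVal x).meet (boolVal y) by decide
  map_join := show ∀ x y : Fin 2, boolVal (max x y) = (boolVal x).join (boolVal y) by decide
  map_sim := show ∀ x : Fin 2, boolVal (![1, 0] x : Fin 2) = (boolVal x).sim by decide
  map_nabla := show ∀ x : Fin 2, boolVal (![0, 1] x : Fin 2) = (boolVal x).nabla by decide
  map_zero := rfl
  map_one := rfl

/-- The map `T → L₆` preserving the extreme elements, sending `∅` to `m`, and sending a nonempty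
`S` to the join of `m` with those of the three values `A`, `B`, `C` whose index 0, 1, 2 lies
in `S`. -/
def shape (m A B C : L6) : D42c → L6
  | none => .z
  | some none => .u
  | some (some S) =>
      (((m.join (if 0 ∈ S then A else m)).join (if 1 ∈ S then B else m)).join
        (if 2 ∈ S then C else m))

/-- The value tuples `(m, A, B, C)` of the five homomorphisms `T → L₆`: on the eight middle
elements these are the two constant maps, the projection to the factor `{d, c}` (the third atom),
and the two maps onto `{d, a, b, c}` (the first two atoms). -/
def IsShape (m A B C : L6) : Prop :=
  (m, A, B, C) ∈ ([(.a, .a, .a, .a), (.b, .b, .b, .b), (.d, .d, .d, .c), (.d, .a, .b, .d),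
    (.d, .b, .a, .d)] : List (L6 × L6 × L6 × L6))

instance (m A B C : L6) : Decidable (IsShape m A B C) := by
  unfold IsShape; infer_instance

theorem IsShape.cases {P : L6 → L6 → L6 → L6 → Prop} {m A B C : L6} (h : IsShape m A B C)
    (h1 : P .a .a .a .a) (h2 : P .b .b .b .b) (h3 : P .d .d .d .c) (h4 : P .d .a .b .d)
    (h5 : P .d .b .a .d) : P m A B C := by
  simp only [IsShape, List.mem_cons, Prod.mk.injEq, List.not_mem_nil, or_false] at h
  rcases h with ⟨rfl, rfl, rfl, rfl⟩ | ⟨rfl, rfl, rfl, rfl⟩ | ⟨rfl, rfl, rfl, rfl⟩ |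
    ⟨rfl, rfl, rfl, rfl⟩ | ⟨rfl, rfl, rfl, rfl⟩ <;> assumption

theorem shape_meet {m A B C : L6} (h : IsShape m A B C) (x y : D42c) :
    shape m A B C (D42meet x y) = (shape m A B C x).meet (shape m A B C y) := by
  revert x y
  exact IsShape.cases (P := fun m A B C => ∀ x y, shape m A B C (D42meet x y) =
      (shape m A B C x).meet (shape m A B C y)) h
    (by decide) (by decide) (by decide) (by decide) (by decide)

theorem shape_join {m A B C : L6} (h : IsShape m A B C) (x y : D42c) :
    shape m A B C (D42join x y) = (shape m A B C x).join (shape m A B C y) := by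
  revert x y
  exact IsShape.cases (P := fun m A B C => ∀ x y, shape m A B C (D42join x y) =
      (shape m A B C x).join (shape m A B C y)) h
    (by decide) (by decide) (by decide) (by decide) (by decide)

theorem shape_sim {m A B C : L6} (h : IsShape m A B C) (x : D42c) :
    shape m A B C (D42neg x) = (shape m A B C x).sim := by
  revert x
  exact IsShape.cases (P := fun m A B C => ∀ x, shape m A B C (D42neg x) =
      (shape m A B C x).sim) h
    (by decide) (by decide) (by decide) (by decide) (by decide)

theorem shape_nabla {m A B C : L6} (h : IsShape m A B C) (x : D42c) :
    shape m A B C (D42nabla x) = (shape m A B C x).nabla := by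
  revert x
  exact IsShape.cases (P := fun m A B C => ∀ x, shape m A B C (D42nabla x) =
      (shape m A B C x).nabla) h
    (by decide) (by decide) (by decide) (by decide) (by decide)

/-- The homomorphism `T → L₆` with the given value tuple. -/
def shapeHom {m A B C : L6} (h : IsShape m A B C) : ISHom Talg L6alg where
  toFun := shape m A B C
  map_meet := shape_meet h
  map_join := shape_join h
  map_sim := shape_sim h
  map_nabla := shape_nabla h
  map_zero := rfl
  map_one := rfl

/-- The homomorphism `2 × T → L₆` that forgets the first factor and the third atom. -/
def homD4 : ISHom (prodIS twoIS Talg) L6alg :=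
  (shapeHom (show IsShape .d .a .b .d by decide)).compSnd

/-- The homomorphism `2 × T → L₆` onto `{0, d, c, 1}` given by the third atom. -/
def homZ : ISHom (prodIS twoIS Talg) L6alg :=
  (shapeHom (show IsShape .d .d .d .c by decide)).compSnd

/-- The homomorphism `2 × T → L₆` given by the first factor. -/
def homBool : ISHom (prodIS twoIS Talg) L6alg := boolHom.compFst

/-- Three homomorphisms to `L₆` separate the points of `2 × T`; in particular `2 × T` satisfies
every identity of `L₆`. -/
theorem joint_injective {x y : (prodIS twoIS Talg).carrier}
    (h1 : homBool.toFun x = homBool.toFun y) (h2 : homD4.toFun x = homD4.toFun y)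
    (h3 : homZ.toFun x = homZ.toFun y) : x = y := by
  obtain ⟨i, s⟩ := x
  obtain ⟨j, t⟩ := y
  have hij : ∀ i j : Fin 2, boolVal i = boolVal j → i = j := by decide
  have hst : ∀ s t : D42c, shape .d .a .b .d s = shape .d .a .b .d t →
      shape .d .d .d .c s = shape .d .d .d .c t → s = t := by decide
  exact Prod.ext (hij i j h1) (hst s t h2 h3)

theorem homD4_surjective : Function.Surjective homD4.toFun := by
  have h : ∀ y : L6, ∃ t : D42c, shape .d .a .b .d t = y := by
    intro y
    cases y
    · exact ⟨none, rfl⟩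
    · exact ⟨some (some ∅), by decide⟩
    · exact ⟨some (some {0}), by decide⟩
    · exact ⟨some (some {1}), by decide⟩
    · exact ⟨some (some {0, 1}), by decide⟩
    · exact ⟨some none, rfl⟩
  intro y
  obtain ⟨t, ht⟩ := h y
  exact ⟨((0 : Fin 2), t), ht⟩

/-! ### An embedding of 2 × T into the free algebra on two generators -/

/-- The term `p ∧ ∼p` in the variable `p` of index `n`. -/
def lo (n : ℕ) : ISTerm ℕ := .meet (.var n) (.sim (.var n))

/-- The term `p ∨ ∼p` in the variable `p` of index `n`. -/
def hi (n : ℕ) : ISTerm ℕ := .join (.var n) (.sim (.var n))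

/-- The term for the first atom. -/
def atomA : ISTerm ℕ := .join (lo 0) (.meet (hi 0) (lo 1))

/-- The term for the second atom. -/
def atomB : ISTerm ℕ := .join (lo 1) (.meet (lo 0) (hi 1))

/-- The term for the third atom. -/
def atomC : ISTerm ℕ := .meet (hi 0) (hi 1)

/-- The term for the empty set. -/
def botM : ISTerm ℕ := .meet atomA atomB

/-- The Boolean term with value `1` when neither variable 0 nor variable 1 takes a value in
`{0, 1}`, and with value `0` otherwise. -/
def guardE : ISTerm ℕ := .meet (.nabla (lo 0)) (.nabla (lo 1))

/-- The term for an element of `T`. -/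
def termT : D42c → ISTerm ℕ
  | none => .zero
  | some none => .one
  | some (some S) =>
      .join (.join (.join botM (if 0 ∈ S then atomA else botM)) (if 1 ∈ S then atomB else botM))
        (if 2 ∈ S then atomC else botM)

/-- The term for an element of `2`. -/
def termTwo (i : Fin 2) : ISTerm ℕ := if i = 0 then .zero else .one

/-- The term for an element of `2 × T`: the second coordinate where `guardE` is `1`, the first
coordinate where `guardE` is `0`. -/
def emb (x : (prodIS twoIS Talg).carrier) : ISTerm ℕ :=
  .join (.meet guardE (termT x.2)) (.meet (.sim guardE) (termTwo x.1))

theorem eval_termT (w : ℕ → L6alg.carrier) (t : D42c) :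
    (termT t).eval L6alg w = shape (botM.eval L6alg w) (atomA.eval L6alg w)
      (atomB.eval L6alg w) (atomC.eval L6alg w) t := by
  rcases t with _ | _ | S
  · rfl
  · rfl
  · simp only [termT, shape, ISTerm.eval, apply_ite (ISTerm.eval L6alg w)]
    rfl

theorem eval_termTwo (w : ℕ → L6alg.carrier) (i : Fin 2) : (termTwo i).eval L6alg w = boolVal i := by
  unfold termTwo boolVal
  split <;> rfl

/-- The two regions of assignments: either the guard is `0`, or it is `1` and the values of the
four basic terms form the value tuple of a homomorphism `T → L₆`. -/
theorem guard_cases (w : ℕ → L6alg.carrier) :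
    guardE.eval L6alg w = L6.z ∨
      (guardE.eval L6alg w = L6.u ∧ IsShape (botM.eval L6alg w) (atomA.eval L6alg w)
        (atomB.eval L6alg w) (atomC.eval L6alg w)) := by
  simp only [guardE, botM, atomA, atomB, atomC, lo, hi, ISTerm.eval, L6alg]
  generalize w 0 = p
  generalize w 1 = q
  cases p <;> cases q <;> decide

/-- Where the guard is `0`, the embedding reads off the first coordinate. -/
theorem emb_of_guard_zero {w : ℕ → L6alg.carrier} (h : guardE.eval L6alg w = L6.z)
    (x : (prodIS twoIS Talg).carrier) : (emb x).eval L6alg w = homBool.toFun x := by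
  have key : ∀ s t : L6, (L6.z.meet s).join (L6.z.sim.meet t) = t := by
    intro s t; cases s <;> cases t <;> rfl
  simp only [emb, ISTerm.eval, h]
  exact (key ((termT x.2).eval L6alg w) _).trans (eval_termTwo w x.1)

/-- Where the guard is `1`, the embedding reads off the second coordinate. -/
theorem emb_of_guard_one {w : ℕ → L6alg.carrier} (h : guardE.eval L6alg w = L6.u)
    (x : (prodIS twoIS Talg).carrier) :
    (emb x).eval L6alg w = shape (botM.eval L6alg w) (atomA.eval L6alg w)
      (atomB.eval L6alg w) (atomC.eval L6alg w) x.2 := by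
  have key : ∀ s t : L6, (L6.u.meet s).join (L6.u.sim.meet t) = s := by
    intro s t; cases s <;> cases t <;> rfl
  simp only [emb, ISTerm.eval, h]
  exact (key _ ((termTwo x.1).eval L6alg w)).trans (eval_termT w x.2)

/-- Under every assignment in `L₆`, the value of `emb x` is a homomorphic function of `x`. -/
theorem exists_hom_emb (w : ℕ → L6alg.carrier) :
    ∃ h : ISHom (prodIS twoIS Talg) L6alg, ∀ x, (emb x).eval L6alg w = h.toFun x := by
  rcases guard_cases w with h | ⟨h, hs⟩
  · exact ⟨homBool, emb_of_guard_zero h⟩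
  · exact ⟨(shapeHom hs).compSnd, emb_of_guard_one h⟩

/-- The embedding is injective modulo the identities of `L₆`: the assignments `(0, 0)`, `(a, b)`
and `(d, d)` of the first two variables recover the three separating homomorphisms. -/
theorem emb_injective {x y : (prodIS twoIS Talg).carrier}
    (h : ISIdValid L6alg (emb x) (emb y)) : x = y := by
  apply joint_injective
  · have e := fun t => emb_of_guard_zero (w := fun _ => L6.z) rfl t
    exact (e x).symm.trans ((h _).trans (e y))
  · have e := fun t => emb_of_guard_one (w := fun n => if n = 0 then L6.a else L6.b) rfl t
    exact (e x).symm.trans ((h _).trans (e y))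
  · have e := fun t => emb_of_guard_one (w := fun _ => L6.d) rfl t
    exact (e x).symm.trans ((h _).trans (e y))

/-- `2 × T` belongs to the variety generated by `L₆`, since homomorphisms to `L₆` separate its
points. -/
theorem idValid_prod {φ ψ : ISTerm ℕ} (h : ISIdValid L6alg φ ψ) :
    ISIdValid (prodIS twoIS Talg) φ ψ := by
  intro v
  apply joint_injective <;> simp only [ISHom.map_eval] <;> exact h _

/-- `L₆` is a homomorphic image of `2 × T`, hence inherits its identities. -/
theorem idValid_of_prod {φ ψ : ISTerm ℕ} (h : ISIdValid (prodIS twoIS Talg) φ ψ) :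
    ISIdValid L6alg φ ψ := by
  intro w
  choose v hv using fun n => homD4_surjective (w n)
  have := congrArg homD4.toFun (h v)
  simpa only [ISHom.map_eval, hv] using this

/-- Under the substitution `n ↦ emb (v n)` an identity becomes valid in `L₆` exactly when `v`
satisfies it in `2 × T`. -/
theorem idValid_emb_iff (v : ℕ → (prodIS twoIS Talg).carrier) (φ ψ : ISTerm ℕ) :
    ISIdValid L6alg (φ.subst fun n => emb (v n)) (ψ.subst fun n => emb (v n)) ↔
      φ.eval (prodIS twoIS Talg) v = ψ.eval (prodIS twoIS Talg) v := by
  have key : ∀ (t : ISTerm ℕ) (w : ℕ → L6alg.carrier), (t.subst fun n => emb (v n)).eval L6alg w =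
      (emb (t.eval (prodIS twoIS Talg) v)).eval L6alg w := by
    intro t w
    obtain ⟨h, hh⟩ := exists_hom_emb w
    rw [ISTerm.eval_subst, hh, h.map_eval]
    congr 1
    funext n
    exact hh (v n)
  constructor
  · intro h
    apply emb_injective
    intro w
    rw [← key, ← key]
    exact h w
  · intro h w
    rw [key, key, h]

theorem statement17 (Γ : List (ISTerm ℕ × ISTerm ℕ)) (φ ψ : ISTerm ℕ) :
    ISAdmissible L6alg Γ φ ψ ↔ ISQValid (prodIS twoIS Talg) Γ φ ψ := by
  constructor
  · intro h v hΓ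
    exact (idValid_emb_iff v φ ψ).1
      (h (fun n => emb (v n)) fun p hp => (idValid_emb_iff v p.1 p.2).2 (hΓ p hp))
  · intro h s hΓ
    apply idValid_of_prod
    intro v
    rw [ISTerm.eval_subst, ISTerm.eval_subst]
    apply h
    intro p hp
    rw [← ISTerm.eval_subst, ← ISTerm.eval_subst]
    exact idValid_prod (hΓ p hp) v
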